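/- Let n ≥ 3, m ≥ 1, V = ℂ^{n+1}, a = ⌈n/2⌉, and let r be an integer with r ≤ binom(m+n,n). For a general tuple of nonzero vectors v_1,…,v_r ∈ V, define for b ∈ {a, n−a} the subspace W_b = {M ∈ Hom(S^mV, Λ^bV) : M(v_i^m) ∧ v_i = 0 in Λ^{b+1}V for all i = 1,…,r}. Then a nonzero v ∈ V satisfies M(v^m) ∧ v = 0 for every M ∈ W_a and every M ∈ W_{n−a} if and only if v is a scalar multiple of some v_i. Moreover f = Σ_{i=1}^r v_i^{2m+1} has symmetric rank r and its rank-r Waring decomposition is unique up to permutation and scaling. (When n is even, a = n−a and the two subspaces coincide.) -/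

import Mathlib

open MvPolynomial ExteriorAlgebra

/-- The linear form `ℓ_v = Σ_j v_j x_j` associated to a vector `v ∈ ℂ^k`. -/
noncomputable def linForm (k : ℕ) (v : Fin k → ℂ) : MvPolynomial (Fin k) ℂ :=
  ∑ j, MvPolynomial.C (v j) * MvPolynomial.X j

/-- The (symmetric/Waring) rank of `f`: the least `r` such that
`f = Σ_{i=1}^r c_i ℓ_{v_i}^d` with all `v_i ≠ 0`. -/
noncomputable def waringRank (n d : ℕ) (f : MvPolynomial (Fin (n+1)) ℂ) : ℕ :=
  sInf {r : ℕ | ∃ (c : Fin r → ℂ) (v : Fin r → (Fin (n+1) → ℂ)),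
    (∀ i, v i ≠ 0) ∧ f = ∑ i, c i • (linForm (n+1) (v i)) ^ d}

/-- The rank-`r` decomposition `f = Σ c_i ℓ_{v_i}^d` is unique up to permutation and
scaling: every decomposition `f = Σ c_i' ℓ_{w_i}^d` with all `c_i' ≠ 0`, `w_i ≠ 0` is
obtained from it by a permutation `σ` and nonzero scalars `λ_i` with `w_i = λ_i v_{σ i}`
and `c_i' λ_i^d = c_{σ i}`. -/
def UniqueDecomp (n d r : ℕ) (f : MvPolynomial (Fin (n+1)) ℂ)
    (c : Fin r → ℂ) (v : Fin r → Fin (n+1) → ℂ) : Prop :=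
  ∀ (c' : Fin r → ℂ) (w : Fin r → Fin (n+1) → ℂ),
    (∀ i, c' i ≠ 0) → (∀ i, w i ≠ 0) →
    f = ∑ i, c' i • (linForm (n+1) (w i)) ^ d →
    ∃ (σ : Equiv.Perm (Fin r)) (lam : Fin r → ℂ),
      (∀ i, lam i ≠ 0) ∧ (∀ i, w i = lam i • v (σ i)) ∧ (∀ i, c' i * lam i ^ d = c (σ i))

/-- The basis wedge `e_S = e_{j_1} ∧ ⋯ ∧ e_{j_b}` (indices of `S` in increasing order),
as an element of the exterior algebra of `ℂ^k`. -/
noncomputable def eWedge (k : ℕ) (S : Finset (Fin k)) : ExteriorAlgebra ℂ (Fin k → ℂ) :=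
  ((S.sort (· ≤ ·)).map fun j => ExteriorAlgebra.ι ℂ (Pi.single j (1:ℂ))).prod

/-- The value `M(v^m) ∈ Λ^b ℂ^k` of the tensor `M ∈ Hom(S^m ℂ^k, Λ^b ℂ^k)` represented by
the family of polynomials `q = (q_S)_{|S| = b}`, namely `Σ_S q_S(v) · e_S`. -/
noncomputable def tval (k b : ℕ)
    (q : {S : Finset (Fin k) // S.card = b} → MvPolynomial (Fin k) ℂ)
    (v : Fin k → ℂ) : ExteriorAlgebra ℂ (Fin k → ℂ) :=
  ∑ S : {S : Finset (Fin k) // S.card = b}, MvPolynomial.eval v (q S) • eWedge k S.1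

/-- The coefficient of `x^α`, `|α| = d`, in `ℓ_v^d` is a multinomial coefficient times `v^α`. -/
theorem coeff_linForm_pow {k d : ℕ} (v : Fin k → ℂ) (α : Fin k →₀ ℕ) (hα : α.degree = d) :
    coeff α (linForm k v ^ d) = Nat.multinomial Finset.univ α * ∏ j, v j ^ α j := by
  classical
  have hterm : ∀ β : Fin k → ℕ, (∏ j, (C (v j) * X j : MvPolynomial (Fin k) ℂ) ^ β j) =
      monomial (Finsupp.equivFunOnFinite.symm β) (∏ j, v j ^ β j) := by
    intro β
    rw [monomial_eq, Finsupp.prod_fintype _ _ (by simp), map_prod, ← Finset.prod_mul_distrib]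
    simp [mul_pow]
  have hmem : (⇑α) ∈ Finset.univ.piAntidiag d := by
    simp [Finset.mem_piAntidiag, ← hα, Finsupp.degree_eq_sum]
  have hcoeff : ∀ β : Fin k → ℕ, coeff α ((Nat.multinomial Finset.univ β : MvPolynomial (Fin k) ℂ) *
      monomial (Finsupp.equivFunOnFinite.symm β) (∏ j, v j ^ β j)) =
      if β = α then (Nat.multinomial Finset.univ β : ℂ) * ∏ j, v j ^ β j else 0 := by
    intro β
    rw [← map_natCast (C : ℂ →+* MvPolynomial (Fin k) ℂ), coeff_C_mul, coeff_monomial]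
    by_cases h : β = α
    · subst h
      simp
    · rw [if_neg h, if_neg, mul_zero]
      rintro rfl
      exact h rfl
  rw [linForm, Finset.sum_pow_eq_sum_piAntidiag, coeff_sum]
  simp_rw [hterm, hcoeff]
  rw [Finset.sum_ite_eq', if_pos hmem]

/-- Apolarity: two power-sum expressions of the same form induce the same functional
on polynomials of degree `d`. -/
theorem sum_eval_eq_of_sum_linForm_pow_eq {k d r s : ℕ} {c : Fin r → ℂ} {v : Fin r → Fin k → ℂ}
    {c' : Fin s → ℂ} {w : Fin s → Fin k → ℂ}
    (h : ∑ i, c i • linForm k (v i) ^ d = ∑ j, c' j • linForm k (w j) ^ d)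
    {p : MvPolynomial (Fin k) ℂ} (hp : p.IsHomogeneous d) :
    ∑ i, c i * eval (v i) p = ∑ j, c' j * eval (w j) p := by
  have hmon : ∀ α ∈ p.support,
      ∑ i, c i * ∏ l, v i l ^ α l = ∑ j, c' j * ∏ l, w j l ^ α l := by
    intro α hα
    have hdeg : α.degree = d := by
      rw [Finsupp.degree_eq_weight_one]
      exact hp (mem_support_iff.mp hα)
    have hne : (Nat.multinomial Finset.univ α : ℂ) ≠ 0 :=
      Nat.cast_ne_zero.mpr (Nat.multinomial_pos _ _).ne'
    have := congrArg (coeff α) h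
    simp only [coeff_sum, coeff_smul, coeff_linForm_pow _ α hdeg, smul_eq_mul,
      mul_left_comm _ (Nat.multinomial Finset.univ α : ℂ), ← Finset.mul_sum] at this
    exact mul_left_cancel₀ hne this
  simp only [eval_eq', Finset.mul_sum]
  rw [Finset.sum_comm, Finset.sum_comm (s := (Finset.univ : Finset (Fin s)))]
  refine Finset.sum_congr rfl fun α hα => ?_
  simp only [mul_left_comm _ (coeff α p), ← Finset.mul_sum, hmon α hα]

theorem eval_smul_of_isHomogeneous {σ : Type*} {m : ℕ} {p : MvPolynomial σ ℂ}
    (hp : p.IsHomogeneous m) (a : ℂ) (v : σ → ℂ) :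
    eval (a • v) p = a ^ m * eval v p := by
  rw [eval_eq, eval_eq, Finset.mul_sum]
  refine Finset.sum_congr rfl fun α hα => ?_
  have hdeg : ∑ l ∈ α.support, α l = m := by
    have := hp (mem_support_iff.mp hα)
    rwa [Pi.one_def, ← Finsupp.degree_eq_weight_one] at this
  simp only [Pi.smul_apply, smul_eq_mul, mul_pow, Finset.prod_mul_distrib,
    Finset.prod_pow_eq_pow_sum, hdeg]
  ring

/-- `L` is a family of degree-`m` forms dual to the points `v`. -/
def IsDualForms {k r : ℕ} (m : ℕ) (v : Fin r → Fin k → ℂ)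
    (L : Fin r → MvPolynomial (Fin k) ℂ) : Prop :=
  (∀ i, (L i).IsHomogeneous m) ∧ ∀ i j, eval (v j) (L i) = if i = j then 1 else 0

/-- Tuples of points whose degree-`m` evaluation functionals are independent are generic. -/
theorem exists_polynomial_isDualForms {n m r : ℕ} (hr : r ≤ Nat.choose (m + n) n) :
    ∃ D : MvPolynomial (Fin r × Fin (n + 1)) ℂ, D ≠ 0 ∧
      ∀ v : Fin r → Fin (n + 1) → ℂ, eval (fun t => v t.1 t.2) D ≠ 0 →
        ∃ L, IsDualForms m v L := by
  classical
  have hcard : Fintype.card (Fin r) ≤ Fintype.card (Sym (Fin (n + 1)) m) := by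
    rw [Sym.card_sym_eq_choose, Fintype.card_fin, Fintype.card_fin]
    refine hr.trans (le_of_eq ?_)
    rw [show n + 1 + m - 1 = m + n by omega, Nat.choose_symm_add]
  obtain ⟨g⟩ := Function.Embedding.nonempty_of_card_le hcard
  let e : Fin r → (Fin (n + 1) →₀ ℕ) := fun i => Multiset.toFinsupp (g i : Multiset (Fin (n + 1)))
  have he : Function.Injective e := fun i j h =>
    g.injective (Subtype.ext (Multiset.toFinsupp.injective h))
  have hdeg : ∀ i, (e i).degree = m := fun i => by
    simp [e, Finsupp.degree_eq_sum]
  let A : Matrix (Fin r) (Fin r) (MvPolynomial (Fin r × Fin (n + 1)) ℂ) :=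
    Matrix.of fun i j => monomial ((e i).mapDomain (Prod.mk j)) 1
  refine ⟨A.det, ?_, ?_⟩
  · have hinj : ∀ j : Fin r, Function.Injective (Prod.mk j : Fin (n + 1) → Fin r × Fin (n + 1)) :=
      fun j => Prod.mk_right_injective j
    have happ : ∀ (σ : Equiv.Perm (Fin r)) (j : Fin r) (l : Fin (n + 1)),
        (∑ i, (e (σ i)).mapDomain (Prod.mk i)) (j, l) = e (σ j) l := by
      intro σ j l
      rw [Finsupp.finsetSum_apply, Finset.sum_eq_single j]
      · exact Finsupp.mapDomain_apply (hinj j) _ _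
      · intro i _ hij
        refine Finsupp.mapDomain_of_notMem_range _ _ ?_
        rintro ⟨x, hx⟩
        exact hij (congrArg Prod.fst hx)
      · simp
    intro h0
    have h1 := congrArg (coeff (∑ i, (e i).mapDomain (Prod.mk i))) h0
    rw [Matrix.det_apply, coeff_sum, Finset.sum_eq_single 1] at h1
    · simp [A, ← monomial_sum_one] at h1
    · intro σ _ hσ
      have hne : ∑ i, (e (σ i)).mapDomain (Prod.mk i) ≠ ∑ i, (e i).mapDomain (Prod.mk i) := by
        intro h
        refine hσ (Equiv.ext fun j => he (Finsupp.ext fun l => ?_))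
        have h2 := DFunLike.congr_fun h (j, l)
        rw [happ σ] at h2
        exact h2.trans (happ 1 j l)
      rw [show ∏ i, A (σ i) i = monomial (∑ i, (e (σ i)).mapDomain (Prod.mk i)) 1 by
        simp [A, ← monomial_sum_one], Units.smul_def, coeff_smul, coeff_monomial, if_neg hne,
        smul_zero]
    · simp
  · intro v hv
    let G : Matrix (Fin r) (Fin r) ℂ := Matrix.of fun i j => eval (v j) (monomial (e i) 1)
    have hG : IsUnit G.det := by
      refine isUnit_iff_ne_zero.mpr ?_
      rw [RingHom.map_det] at hv
      convert hv using 2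
      ext i j
      simp [G, A, eval_monomial, Finsupp.prod_mapDomain_index_inj (Prod.mk_right_injective j)]
    refine ⟨fun i => ∑ k, C (G⁻¹ i k) * monomial (e k) 1, fun i => ?_, fun i j => ?_⟩
    · refine IsHomogeneous.sum _ _ _ fun k _ => ?_
      rw [C_mul_monomial]
      exact isHomogeneous_monomial _ (hdeg k)
    · have := congrFun (congrFun (Matrix.nonsing_inv_mul G hG) i) j
      rw [Matrix.mul_apply, Matrix.one_apply] at this
      rw [← this]
      simp only [map_sum, map_mul, eval_C]
      rfl

theorem exists_linear_eval_eq_one {k : ℕ} {v : Fin k → ℂ} (hv : v ≠ 0) :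
    ∃ h : MvPolynomial (Fin k) ℂ, h.IsHomogeneous 1 ∧ eval v h = 1 := by
  obtain ⟨j, hj⟩ := Function.ne_iff.mp hv
  refine ⟨C (v j)⁻¹ * X j, ?_, ?_⟩
  · simpa using (isHomogeneous_C (Fin k) (v j)⁻¹).mul (isHomogeneous_X ℂ j)
  · simpa using inv_mul_cancel₀ hj

/-- Any power-sum expression of `Σ ℓ_{v_i}^{2m+1}` factors the identity matrix through the values
of the dual forms at its points. -/
theorem exists_factorization_of_decomp {k m r s : ℕ} {v : Fin r → Fin k → ℂ}
    (hv : ∀ i, v i ≠ 0) {L : Fin r → MvPolynomial (Fin k) ℂ} (hL : IsDualForms m v L)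
    {c : Fin s → ℂ} {w : Fin s → Fin k → ℂ}
    (h : ∑ i, linForm k (v i) ^ (2 * m + 1) = ∑ j, c j • linForm k (w j) ^ (2 * m + 1)) :
    ∃ A : Matrix (Fin r) (Fin s) ℂ, A * Matrix.of (fun j i => eval (w j) (L i)) = 1 := by
  choose l hl hl1 using fun i => exists_linear_eval_eq_one (hv i)
  refine ⟨Matrix.of fun i j => c j * eval (w j) (L i * l i), ?_⟩
  ext i i'
  have hp : (L i * l i * L i').IsHomogeneous (2 * m + 1) := by
    convert ((hL.1 i).mul (hl i)).mul (hL.1 i') using 1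
    ring
  have := sum_eval_eq_of_sum_linForm_pow_eq (c := fun _ => 1) (by simpa using h) hp
  simp only [map_mul, hL.2, Matrix.mul_apply, Matrix.of_apply, Matrix.one_apply] at this ⊢
  rw [Finset.sum_eq_single i] at this
  · simp only [hl1, if_true, one_mul, mul_one, eq_comm (a := i')] at this
    rw [this]
    exact Finset.sum_congr rfl fun j _ => by ring
  · intro b _ hb
    simp [hb.symm]
  · simp

theorem waringRank_eq_of_isDualForms {n m r : ℕ} {v : Fin r → Fin (n + 1) → ℂ}
    (hv : ∀ i, v i ≠ 0) {L : Fin r → MvPolynomial (Fin (n + 1)) ℂ} (hL : IsDualForms m v L) :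
    waringRank n (2 * m + 1) (∑ i, linForm (n + 1) (v i) ^ (2 * m + 1)) = r := by
  refine le_antisymm (Nat.sInf_le ⟨fun _ => 1, v, hv, by simp⟩) ?_
  refine le_csInf ⟨r, fun _ => 1, v, hv, by simp⟩ ?_
  rintro s ⟨c, w, -, h⟩
  obtain ⟨A, hA⟩ := exists_factorization_of_decomp hv hL h
  have h1 := Matrix.rank_mul_le_left A (Matrix.of fun j i => eval (w j) (L i))
  rw [hA, Matrix.rank_one, Fintype.card_fin] at h1
  exact h1.trans (A.rank_le_width)

theorem uniqueDecomp_of_isDualForms {n m r : ℕ} {v : Fin r → Fin (n + 1) → ℂ}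
    (hv : ∀ i, v i ≠ 0) {L : Fin r → MvPolynomial (Fin (n + 1)) ℂ} (hL : IsDualForms m v L) :
    UniqueDecomp n (2 * m + 1) r (∑ i, linForm (n + 1) (v i) ^ (2 * m + 1)) (fun _ => 1) v := by
  intro c w hc hw h
  obtain ⟨A, hA⟩ := exists_factorization_of_decomp hv hL h
  have hBA := mul_eq_one_comm.mp hA
  -- forms dual to the points `w`
  let K : Fin r → MvPolynomial (Fin (n + 1)) ℂ := fun j => ∑ i, C (A i j) * L i
  have hKhom : ∀ j, (K j).IsHomogeneous m := fun j =>
    IsHomogeneous.sum _ _ _ fun i _ => by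
      simpa using (isHomogeneous_C _ (A i j)).mul (hL.1 i)
  have hKval : ∀ j j', eval (w j') (K j) = if j = j' then 1 else 0 := by
    intro j j'
    have := congrFun (congrFun hBA j') j
    rw [Matrix.mul_apply, Matrix.one_apply] at this
    simp only [eq_comm (a := j), ← this]
    simp [K, mul_comm]
  have key : ∀ i j, eval (v i) (K j) • v i = (c j * eval (w j) (L i)) • w j := by
    intro i j
    ext t
    have hp : (L i * K j * X t).IsHomogeneous (2 * m + 1) := by
      convert ((hL.1 i).mul (hKhom j)).mul (isHomogeneous_X ℂ t) using 1
      ring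
    have := sum_eval_eq_of_sum_linForm_pow_eq (c := fun _ => 1) (by simpa using h) hp
    simp only [map_mul, hL.2, hKval, eval_X] at this
    simpa [mul_assoc] using this
  have hex : ∀ j, ∃ i, eval (w j) (L i) ≠ 0 := by
    intro j
    by_contra! h0
    have := congrFun (congrFun hBA j) j
    simp [Matrix.mul_apply, h0] at this
  choose σ hσ using hex
  have hscal : ∀ j, ∃ a : ℂ, w j = a • v (σ j) := fun j => by
    refine ⟨(c j * eval (w j) (L (σ j)))⁻¹ * eval (v (σ j)) (K j), ?_⟩
    rw [mul_smul, key, smul_smul, inv_mul_cancel₀ (mul_ne_zero (hc j) (hσ j)), one_smul]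
  choose a ha using hscal
  have ha0 : ∀ j, a j ≠ 0 := fun j h0 => hw j (by rw [ha j, h0, zero_smul])
  have hKv : ∀ j, a j ^ m * eval (v (σ j)) (K j) = 1 := fun j => by
    rw [← eval_smul_of_isHomogeneous (hKhom j), ← ha j, hKval, if_pos rfl]
  have hinj : Function.Injective σ := by
    intro j j' hjj
    by_contra hne
    have h1 := hKval j j'
    rw [if_neg hne, ha j', eval_smul_of_isHomogeneous (hKhom j), ← hjj] at h1
    have h2 := (mul_eq_zero.mp h1).resolve_left (pow_ne_zero _ (ha0 j'))
    simpa [h2] using hKv j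
  refine ⟨Equiv.ofBijective σ (Finite.injective_iff_bijective.mp hinj), a, ha0, ha, fun j => ?_⟩
  have hLw : eval (w j) (L (σ j)) = a j ^ m := by
    rw [ha j, eval_smul_of_isHomogeneous (hL.1 _), hL.2, if_pos rfl, mul_one]
  have h1 := key (σ j) j
  rw [hLw, ha j, smul_smul] at h1
  have h2 := smul_left_injective ℂ (hv (σ j)) h1
  have h3 := hKv j
  rw [h2] at h3
  rw [← h3]
  ring

theorem exists_linearIndependent_of_pair {k : ℕ} {u v : Fin k → ℂ}
    (huv : LinearIndependent ℂ ![v, u]) (b : ℕ) (hb : b + 2 ≤ k) :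
    ∃ y : Fin (b + 1) → Fin k → ℂ,
      y (Fin.last b) = v ∧ LinearIndependent ℂ (Fin.snoc y u : Fin (b + 2) → Fin k → ℂ) := by
  induction b with
  | zero =>
    refine ⟨![v], rfl, ?_⟩
    convert huv using 1
    ext i : 1
    fin_cases i <;> rfl
  | succ b ih =>
    obtain ⟨y, hy, hli⟩ := ih (by omega)
    obtain ⟨x, hx⟩ := exists_linearIndependent_cons_of_lt_finrank hli
      (by rw [Module.finrank_fin_fun]; omega)
    refine ⟨Fin.cons x y, ?_, ?_⟩
    · rw [← Fin.succ_last, Fin.cons_succ, hy]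
    · rwa [← Fin.cons_snoc_eq_snoc_cons]

theorem ιMulti_snoc {M : Type*} [AddCommGroup M] [Module ℂ M] {b : ℕ} (y : Fin b → M) (x : M) :
    ιMulti ℂ (b + 1) (Fin.snoc y x : Fin (b + 1) → M) = ιMulti ℂ b y * ι ℂ x := by
  rw [ιMulti_apply, ιMulti_apply, List.ofFn_succ', List.concat_eq_append, List.prod_append]
  simp

theorem ιMulti_ne_zero_of_linearIndependent {M : Type*} [AddCommGroup M] [Module ℂ M] {b : ℕ}
    {y : Fin b → M} (hy : LinearIndependent ℂ y) : ιMulti ℂ b y ≠ 0 := by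
  have h := (exteriorPower.ιMulti_family_linearIndependent_field (n := b) hy).ne_zero
    ⟨Finset.univ, by simp [Set.powersetCard]⟩
  intro h0
  refine h (Subtype.ext ?_)
  have hid : ⇑(Finset.univ.orderEmbOfFin (Finset.card_fin b)) = id :=
    (Finset.orderEmbOfFin_unique _ (fun _ => Finset.mem_univ _) strictMono_id).symm
  simpa [ιMulti_family, Set.powersetCard.ofFinEmbEquiv_symm_apply, hid] using h0

theorem ιMulti_mem_span_eWedge {k b : ℕ} (y : Fin b → Fin k → ℂ) :
    ιMulti ℂ b y ∈ Submodule.span ℂ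
      (Set.range fun S : {S : Finset (Fin k) // S.card = b} => eWedge k S.1) := by
  have hspan := exteriorPower.ιMulti_family_span_fixedDegree_of_span ℂ (n := b)
    (Pi.basisFun ℂ (Fin k)).span_eq
  have hy : ιMulti ℂ b y ∈ ⋀[ℂ]^b (Fin k → ℂ) := (exteriorPower.ιMulti ℂ b y).2
  rw [← hspan] at hy
  refine Submodule.span_mono ?_ hy
  rintro _ ⟨S, rfl⟩
  refine ⟨⟨S.1, S.2⟩, ?_⟩
  have hlist := congrArg (List.map fun j => ι ℂ (Pi.single j (1 : ℂ)))
    (Finset.listMap_orderEmbOfFin_finRange S.1 S.2)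
  simp only [eWedge]
  rw [← hlist]
  simp [ιMulti_family, ιMulti_apply, List.ofFn_eq_map, Set.powersetCard.ofFinEmbEquiv_symm_apply,
    Function.comp_def]

/-- If `u` and `v` are independent, some `b`-vector is killed by `v` but not by `u`. -/
theorem exists_coeff_mul_ι {k b : ℕ} {u v : Fin k → ℂ} (huv : LinearIndependent ℂ ![v, u])
    (hb1 : 1 ≤ b) (hb2 : b + 1 ≤ k) :
    ∃ c : {S : Finset (Fin k) // S.card = b} → ℂ,
      (∑ S, c S • eWedge k S.1) * ι ℂ v = 0 ∧ (∑ S, c S • eWedge k S.1) * ι ℂ u ≠ 0 := by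
  obtain ⟨b, rfl⟩ := Nat.exists_eq_add_of_le' hb1
  obtain ⟨y, hy, hli⟩ := exists_linearIndependent_of_pair huv b hb2
  obtain ⟨c, hc⟩ := (Submodule.mem_span_range_iff_exists_fun ℂ).mp (ιMulti_mem_span_eWedge y)
  refine ⟨c, ?_, ?_⟩
  · rw [hc, ← ιMulti_snoc]
    refine AlternatingMap.map_eq_zero_of_eq _ _ (i := (Fin.last b).castSucc)
      (j := Fin.last (b + 1)) ?_ (Fin.castSucc_lt_last _).ne
    simp [hy]
  · rw [hc, ← ιMulti_snoc]
    exact ιMulti_ne_zero_of_linearIndependent hli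

theorem tval_smul_const {k b : ℕ} (c : {S : Finset (Fin k) // S.card = b} → ℂ)
    (p : MvPolynomial (Fin k) ℂ) (x : Fin k → ℂ) :
    tval k b (fun S => C (c S) * p) x = eval x p • ∑ S, c S • eWedge k S.1 := by
  simp [tval, Finset.smul_sum, smul_smul, mul_comm]

theorem tval_smul_vec {k b m : ℕ}
    {q : {S : Finset (Fin k) // S.card = b} → MvPolynomial (Fin k) ℂ}
    (hq : ∀ S, (q S).IsHomogeneous m) (a : ℂ) (x : Fin k → ℂ) :
    tval k b q (a • x) = a ^ m • tval k b q x := by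
  simp [tval, Finset.smul_sum, smul_smul, eval_smul_of_isHomogeneous (hq _)]

/-- A common eigenvector of all degree-`m` tensors having the `v_i` as eigenvectors
is a multiple of some `v_i`. -/
theorem exists_eq_smul_of_common_eigenvector {k b m r : ℕ} (hb1 : 1 ≤ b) (hb2 : b + 1 ≤ k)
    {v : Fin r → Fin k → ℂ} (hv : ∀ i, v i ≠ 0)
    {L : Fin r → MvPolynomial (Fin k) ℂ} (hL : IsDualForms m v L) {u : Fin k → ℂ} (hu : u ≠ 0)
    (h : ∀ q : {S : Finset (Fin k) // S.card = b} → MvPolynomial (Fin k) ℂ,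
      (∀ S, (q S).IsHomogeneous m) → (∀ i, tval k b q (v i) * ι ℂ (v i) = 0) →
      tval k b q u * ι ℂ u = 0) :
    ∃ i, ∃ a : ℂ, u = a • v i := by
  have hhom : ∀ (c : {S : Finset (Fin k) // S.card = b} → ℂ) {p : MvPolynomial (Fin k) ℂ},
      p.IsHomogeneous m → ∀ S, (C (c S) * p).IsHomogeneous m := fun c p hp S => by
    simpa using (isHomogeneous_C _ (c S)).mul hp
  have hLu : ∃ i, eval u (L i) ≠ 0 := by
    by_contra! h0
    obtain ⟨x, hx⟩ := exists_linearIndependent_cons_of_lt_finrank (v := ![u])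
      (LinearIndependent.of_subsingleton 0 hu) (by rw [Module.finrank_fin_fun]; omega)
    obtain ⟨c, -, hc⟩ := exists_coeff_mul_ι (v := x) (u := u) hx hb1 hb2
    obtain ⟨l, hl, hl1⟩ := exists_linear_eval_eq_one hu
    let p := l ^ m - ∑ i, C (eval (v i) (l ^ m)) * L i
    have hp : p.IsHomogeneous m := by
      refine IsHomogeneous.sub (by simpa using hl.pow m) (IsHomogeneous.sum _ _ _ fun i _ => ?_)
      simpa using (isHomogeneous_C _ (eval (v i) (l ^ m))).mul (hL.1 i)
    have hpu : eval u p = 1 := by simp [p, hl1, h0]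
    have hpv : ∀ i, eval (v i) p = 0 := fun i => by simp [p, hL.2]
    have := h (fun S => C (c S) * p) (hhom c hp) fun i => by simp [tval_smul_const, hpv]
    rw [tval_smul_const, hpu, one_smul] at this
    exact hc this
  obtain ⟨i, hi⟩ := hLu
  refine ⟨i, ?_⟩
  by_contra! hne
  have hli : LinearIndependent ℂ ![v i, u] := by
    rw [LinearIndependent.pair_iff' (hv i)]
    exact fun a ha => hne a ha.symm
  obtain ⟨c, hcv, hcu⟩ := exists_coeff_mul_ι hli hb1 hb2
  have := h (fun S => C (c S) * L i) (hhom c (hL.1 i)) fun j => by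
    rw [tval_smul_const, hL.2]
    split_ifs with hij
    · rw [one_smul, ← hij, hcv]
    · rw [zero_smul, zero_mul]
  rw [tval_smul_const, smul_mul_assoc] at this
  exact (smul_ne_zero hi hcu) this

/-- **Theorem 5.4 (Koszul flattening decomposition, `n ≥ 3`)**: let `a = ⌈n/2⌉` and
`r ≤ binom(m+n,n)`.  For a general tuple of nonzero vectors `v_1,…,v_r ∈ ℂ^{n+1}`, for
`b ∈ {a, n−a}` let `W_b ⊆ Hom(S^mℂ^{n+1}, Λ^bℂ^{n+1})` consist of the tensors
(represented by component polynomials `(q_S)_{|S|=b}` homogeneous of degree `m`) having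
each `v_i` as an eigenvector.  Then the common eigenvectors of `W_a` and `W_{n−a}` are
exactly the nonzero multiples of the `v_i`; moreover `f = Σ v_i^{2m+1}` has symmetric
rank `r` and its rank-`r` Waring decomposition is unique up to permutation and scaling.
(When `n` is even the two subspaces coincide.) -/
theorem statement18 (n m r : ℕ) (hn : 3 ≤ n) (hm : 1 ≤ m)
    (hr : r ≤ Nat.choose (m + n) n) :
    ∃ D : MvPolynomial (Fin r × Fin (n+1)) ℂ, D ≠ 0 ∧
      ∀ v : Fin r → Fin (n+1) → ℂ, (∀ i, v i ≠ 0) →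
        MvPolynomial.eval (fun t => v t.1 t.2) D ≠ 0 →
        (∀ u : Fin (n+1) → ℂ, u ≠ 0 →
          ((∀ b : ℕ, (b = (n+1)/2 ∨ b = n - (n+1)/2) →
              ∀ q : {S : Finset (Fin (n+1)) // S.card = b} → MvPolynomial (Fin (n+1)) ℂ,
                (∀ S, (q S).IsHomogeneous m) →
                (∀ i, tval (n+1) b q (v i) * ExteriorAlgebra.ι ℂ (v i) = 0) →
                tval (n+1) b q u * ExteriorAlgebra.ι ℂ u = 0) ↔
            ∃ i, ∃ lam : ℂ, u = lam • v i)) ∧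
        waringRank n (2 * m + 1) (∑ i, (linForm (n+1) (v i)) ^ (2 * m + 1)) = r ∧
        UniqueDecomp n (2 * m + 1) r (∑ i, (linForm (n+1) (v i)) ^ (2 * m + 1))
          (fun _ => 1) v := by
  obtain ⟨D, hD, hgen⟩ := exists_polynomial_isDualForms (n := n) (m := m) hr
  refine ⟨D, hD, fun v hv hDv => ?_⟩
  obtain ⟨L, hL⟩ := hgen v hDv
  refine ⟨fun u hu => ⟨fun h => ?_, ?_⟩, waringRank_eq_of_isDualForms hv hL,
    uniqueDecomp_of_isDualForms hv hL⟩
  · exact exists_eq_smul_of_common_eigenvector (by omega) (by omega) hv hL hu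
      (h _ (Or.inl rfl))
  · rintro ⟨i, a, rfl⟩ b - q hq hqv
    rw [tval_smul_vec hq, map_smul, smul_mul_smul_comm, hqv i, smul_zero]
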